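/- Let α ∈ (0,2) and for k ≥ 1 let g_k(s) = c_k|s|^{−k−α} on ℝ^k be normalized so that ∫_{ℝ^k}(1 − cos⟨s,x⟩) g_k(s) ds = |x|^α for all x ∈ ℝ^k. Define D_α(X,Y) = Σ_{k=1}^∞ (e^{-1}/k!) ∫_{[0,1]^k} ∫_{ℝ^{2k}} |φ_{X,Y}(x_k; s_k, t_k) − φ_X(x_k; s_k)φ_Y(x_k; t_k)|² g_k(s_k) g_k(t_k) ds_k dt_k dx_k ∈ [0,∞]. Then D_α(X,Y) = 0 if and only if the joint law of (X,Y) on C([0,1],ℝ) × C([0,1],ℝ) equals the product of the law of X and the law of Y. -/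

import Mathlib

open MeasureTheory
open scoped unitInterval ENNReal

/-- The joint characteristic function of the finite-dimensional distribution of the pair
of processes `(X, Y)` at the points `x 0, …, x (k-1)` of `[0,1]`. -/
noncomputable def jointCF {Ω : Type*} [MeasurableSpace Ω] (ℙ : Measure Ω)
    (X Y : Ω → C(I, ℝ)) {k : ℕ} (x : Fin k → I) (s t : Fin k → ℝ) : ℂ :=
  ∫ ω, Complex.exp (Complex.I * ((∑ j, (s j * X ω (x j) + t j * Y ω (x j)) : ℝ) : ℂ)) ∂ℙ

/-- The characteristic function of the finite-dimensional distribution of the process `X`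
at the points `x 0, …, x (k-1)` of `[0,1]`. -/
noncomputable def margCF {Ω : Type*} [MeasurableSpace Ω] (ℙ : Measure Ω)
    (X : Ω → C(I, ℝ)) {k : ℕ} (x : Fin k → I) (s : Fin k → ℝ) : ℂ :=
  ∫ ω, Complex.exp (Complex.I * ((∑ j, s j * X ω (x j) : ℝ) : ℂ)) ∂ℙ

/-- The weight function `g_k(s) = c |s|^{−k−α}` on `ℝ^k`, where `|s|` is the Euclidean
norm, written via `|s|^{−k−α} = (Σ_j s_j²)^{(−k−α)/2}`. -/
noncomputable def gWeight (α : ℝ) (k : ℕ) (c : ℝ) (s : Fin k → ℝ) : ℝ :=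
  c * (∑ j, s j ^ 2) ^ ((-((k : ℝ) + α)) / 2)

/-- The `α`-th power `|f(x) − h(x)|^α = (Σ_j (f(x_j) − h(x_j))²)^{α/2}` of the Euclidean
distance between the vectors of values of `f` and `h` at the points `x 0, …, x (k-1)`. -/
noncomputable def eDistPow (α : ℝ) {k : ℕ} (f h : C(I, ℝ)) (x : Fin k → I) : ℝ :=
  (∑ j, (f (x j) - h (x j)) ^ 2) ^ (α / 2)

/-- The `α`-distance covariance `D_α(X,Y)` of two processes with continuous paths on
`[0,1]`, with the (non-integrable) weights `g_k(s) = c_k |s|^{−k−α}`: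
`D_α(X,Y) = Σ_{k≥1} (e^{-1}/k!) ∫_{[0,1]^k} ∫_{ℝ^{2k}} |φ_{X,Y} − φ_X φ_Y|² g_k(s)g_k(t) ds dt dx`. -/
noncomputable def distCovAlpha {Ω : Type*} [MeasurableSpace Ω] (ℙ : Measure Ω)
    (X Y : Ω → C(I, ℝ)) (α : ℝ) (c : ℕ → ℝ) : ℝ≥0∞ :=
  ∑' k : ℕ,
    ENNReal.ofReal (Real.exp (-1) / (Nat.factorial (k + 1) : ℝ)) *
      ∫⁻ (x : Fin (k + 1) → I),
        ∫⁻ (s : Fin (k + 1) → ℝ), ∫⁻ (t : Fin (k + 1) → ℝ),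
          ENNReal.ofReal
            (‖jointCF ℙ X Y x s t - margCF ℙ X x s * margCF ℙ Y x t‖ ^ 2 *
              (gWeight α (k + 1) (c (k + 1)) s * gWeight α (k + 1) (c (k + 1)) t))

lemma aux_openPos : Measure.IsOpenPosMeasure (volume : Measure I) := by
  refine ⟨fun U hU hne h0 => ?_⟩
  obtain ⟨V, hV, rfl⟩ := isOpen_induced_iff.1 hU
  obtain ⟨x, hx⟩ := hne
  have hxc : (x : ℝ) ∈ closure (Set.Ioo (0 : ℝ) 1) := by
    rw [closure_Ioo (by norm_num)]; exact x.2
  obtain ⟨y, hy⟩ := mem_closure_iff.1 hxc V hV hx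
  rw [unitInterval.volume_apply] at h0
  have hpos : 0 < volume (V ∩ Set.Ioo (0 : ℝ) 1) :=
    (hV.inter isOpen_Ioo).measure_pos volume ⟨y, hy⟩
  have hle : volume (V ∩ Set.Ioo (0 : ℝ) 1) ≤
      volume (Subtype.val '' ((Subtype.val : I → ℝ) ⁻¹' V)) := by
    apply measure_mono
    rintro z ⟨hzV, hz0, hz1⟩
    exact ⟨⟨z, hz0.le, hz1.le⟩, hzV, rfl⟩
  rw [h0] at hle
  exact absurd hle (not_le.2 hpos)

lemma aux_meas_eval {Ω : Type*} [MeasurableSpace Ω]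
    [MeasurableSpace C(I, ℝ)] [BorelSpace C(I, ℝ)]
    {X : Ω → C(I, ℝ)} (hX : Measurable X) (x : I) : Measurable fun ω => X ω x := by
  have : Measurable fun f : C(I, ℝ) => f x := (continuous_eval_const x).measurable
  exact this.comp hX

lemma aux_norm_exp (r : ℝ) : ‖Complex.exp (Complex.I * (r : ℂ))‖ = 1 := by
  rw [mul_comm]; exact Complex.norm_exp_ofReal_mul_I r

lemma aux_cont_joint {Ω : Type*} [MeasurableSpace Ω] (ℙ : Measure Ω) [IsProbabilityMeasure ℙ]
    [MeasurableSpace C(I, ℝ)] [BorelSpace C(I, ℝ)]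
    (X Y : Ω → C(I, ℝ)) (hX : Measurable X) (hY : Measurable Y) (k : ℕ) :
    Continuous fun p : (Fin k → I) × (Fin k → ℝ) × (Fin k → ℝ) =>
      jointCF ℙ X Y p.1 p.2.1 p.2.2 := by
  have hX' := fun x => aux_meas_eval hX x
  have hY' := fun x => aux_meas_eval hY x
  unfold jointCF
  refine continuous_of_dominated (bound := fun _ => 1) ?_ ?_ (integrable_const _) ?_
  · intro p
    exact Measurable.aestronglyMeasurable (by fun_prop)
  · intro p
    exact ae_of_all _ fun ω => (aux_norm_exp _).le
  · exact ae_of_all _ fun ω => by fun_prop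

lemma aux_joint_zero_right {Ω : Type*} [MeasurableSpace Ω] (ℙ : Measure Ω)
    (X Y : Ω → C(I, ℝ)) {k : ℕ} (x : Fin k → I) (s : Fin k → ℝ) :
    jointCF ℙ X Y x s 0 = margCF ℙ X x s := by
  simp [jointCF, margCF]

lemma aux_joint_zero_left {Ω : Type*} [MeasurableSpace Ω] (ℙ : Measure Ω)
    (X Y : Ω → C(I, ℝ)) {k : ℕ} (x : Fin k → I) (t : Fin k → ℝ) :
    jointCF ℙ X Y x 0 t = margCF ℙ Y x t := by
  simp [jointCF, margCF]

lemma aux_marg_zero {Ω : Type*} [MeasurableSpace Ω] (ℙ : Measure Ω) [IsProbabilityMeasure ℙ]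
    (X : Ω → C(I, ℝ)) {k : ℕ} (x : Fin k → I) :
    margCF ℙ X x 0 = 1 := by
  simp [margCF]

lemma aux_gWeight_pos (α : ℝ) (k : ℕ) (c : ℝ) (hc : 0 < c) (s : Fin k → ℝ) (hs : s ≠ 0) :
    0 < gWeight α k c s := by
  unfold gWeight
  obtain ⟨j, hj⟩ := Function.ne_iff.1 hs
  have : 0 < ∑ j, s j ^ 2 :=
    Finset.sum_pos' (fun i _ => sq_nonneg _) ⟨j, Finset.mem_univ _, by
      have : s j ≠ 0 := hj
      positivity⟩
  positivity

lemma aux_cf_eq {Ω : Type*} [MeasurableSpace Ω] (ℙ : Measure Ω) [IsProbabilityMeasure ℙ]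
    [MeasurableSpace C(I, ℝ)] [BorelSpace C(I, ℝ)]
    (X Y : Ω → C(I, ℝ)) (hX : Measurable X) (hY : Measurable Y)
    (α : ℝ) (c : ℕ → ℝ) (hc_pos : ∀ k, 0 < c k) (h : distCovAlpha ℙ X Y α c = 0)
    (k : ℕ) (x : Fin k → I) (s t : Fin k → ℝ) :
    jointCF ℙ X Y x s t = margCF ℙ X x s * margCF ℙ Y x t := by
  by_cases hs : s = 0
  · subst hs; rw [aux_joint_zero_left, aux_marg_zero, one_mul]
  by_cases ht : t = 0
  · subst ht; rw [aux_joint_zero_right, aux_marg_zero, mul_one]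
  obtain _ | k := k
  · exact absurd (Subsingleton.elim s 0) hs
  have hJ := aux_cont_joint ℙ X Y hX hY (k + 1)
  set F : (Fin (k+1) → I) × (Fin (k+1) → ℝ) × (Fin (k+1) → ℝ) → ℂ := fun p =>
    jointCF ℙ X Y p.1 p.2.1 p.2.2 - margCF ℙ X p.1 p.2.1 * margCF ℙ Y p.1 p.2.2 with hF
  have hFc : Continuous F := by
    refine hJ.sub (Continuous.mul ?_ ?_)
    · have := hJ.comp (f := fun p : (Fin (k+1) → I) × (Fin (k+1) → ℝ) × (Fin (k+1) → ℝ) =>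
        (p.1, p.2.1, 0)) (by fun_prop)
      simpa [Function.comp_def, aux_joint_zero_right] using this
    · have := hJ.comp (f := fun p : (Fin (k+1) → I) × (Fin (k+1) → ℝ) × (Fin (k+1) → ℝ) =>
        (p.1, 0, p.2.2)) (by fun_prop)
      simpa [Function.comp_def, aux_joint_zero_left] using this
  have hk := (ENNReal.tsum_eq_zero.1 h) k
  have hcoef : ENNReal.ofReal (Real.exp (-1) / (Nat.factorial (k + 1) : ℝ)) ≠ 0 := by
    rw [Ne, ENNReal.ofReal_eq_zero, not_le]; positivity
  have hint := (mul_eq_zero.1 hk).resolve_left hcoef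
  set G : (Fin (k+1) → I) × (Fin (k+1) → ℝ) × (Fin (k+1) → ℝ) → ℝ≥0∞ := fun p =>
    ENNReal.ofReal (‖F p‖ ^ 2 * (gWeight α (k + 1) (c (k + 1)) p.2.1 *
      gWeight α (k + 1) (c (k + 1)) p.2.2)) with hG
  have hGm : Measurable G := by
    have hFm := hFc.measurable
    simp only [hG]
    unfold gWeight
    fun_prop
  have hGint : ∫⁻ p, G p = 0 := by
    refine le_antisymm ?_ bot_le
    calc ∫⁻ p, G p ≤ ∫⁻ x, ∫⁻ q, G (x, q) := lintegral_prod_le _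
      _ ≤ ∫⁻ x, ∫⁻ s, ∫⁻ t, G (x, s, t) := lintegral_mono fun x => lintegral_prod_le _
      _ = 0 := hint
      _ ≤ ⊥ := le_rfl
  have hGae := (lintegral_eq_zero_iff hGm).1 hGint
  have := aux_openPos
  set U : Set ((Fin (k+1) → I) × (Fin (k+1) → ℝ) × (Fin (k+1) → ℝ)) :=
    {p | F p ≠ 0 ∧ p.2.1 ≠ 0 ∧ p.2.2 ≠ 0} with hU
  have hUo : IsOpen U := by
    refine (isOpen_ne_fun hFc continuous_const).inter
      ((isOpen_ne_fun (by fun_prop) continuous_const).inter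
        (isOpen_ne_fun (by fun_prop) continuous_const))
  have hU0 : volume U = 0 := by
    refine measure_mono_null ?_ hGae
    rintro p ⟨h1, h2, h3⟩
    have g1 := aux_gWeight_pos α (k+1) _ (hc_pos (k+1)) _ h2
    have g2 := aux_gWeight_pos α (k+1) _ (hc_pos (k+1)) _ h3
    have : 0 < G p := ENNReal.ofReal_pos.2 (by positivity)
    exact this.ne'
  have h1 : Measure.IsOpenPosMeasure (volume : Measure (Fin (k+1) → I)) :=
    Measure.pi.isOpenPosMeasure _
  have h2 : Measure.IsOpenPosMeasure
      (volume : Measure ((Fin (k+1) → I) × (Fin (k+1) → ℝ) × (Fin (k+1) → ℝ))) :=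
    Measure.prod.instIsOpenPosMeasure
  have hUe : U = ∅ := (hUo.measure_eq_zero_iff volume).1 hU0
  by_contra hne
  have : (x, s, t) ∈ U := ⟨sub_ne_zero.2 hne, hs, ht⟩
  rw [hUe] at this
  exact this

lemma aux_indep_fin {Ω : Type*} [MeasurableSpace Ω] (ℙ : Measure Ω) [IsProbabilityMeasure ℙ]
    [MeasurableSpace C(I, ℝ)] [BorelSpace C(I, ℝ)]
    (X Y : Ω → C(I, ℝ)) (hX : Measurable X) (hY : Measurable Y)
    (k : ℕ) (x : Fin k → I)
    (h : ∀ s t : Fin k → ℝ, jointCF ℙ X Y x s t = margCF ℙ X x s * margCF ℙ Y x t) :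
    ProbabilityTheory.IndepFun (fun ω i => X ω (x i)) (fun ω i => Y ω (x i)) ℙ := by
  have hX' := fun x => aux_meas_eval hX x
  have hY' := fun x => aux_meas_eval hY x
  have key : ProbabilityTheory.IndepFun
      (fun ω => (WithLp.toLp 2 (fun i => X ω (x i)) : EuclideanSpace ℝ (Fin k)))
      (fun ω => (WithLp.toLp 2 (fun i => Y ω (x i)) : EuclideanSpace ℝ (Fin k))) ℙ := by
    rw [ProbabilityTheory.indepFun_iff_charFun_prod (by fun_prop) (by fun_prop)]
    intro u
    rw [charFun_apply, charFun_apply, charFun_apply,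
      integral_map (by fun_prop) (Continuous.aestronglyMeasurable (by fun_prop)),
      integral_map (by fun_prop) (Continuous.aestronglyMeasurable (by fun_prop)),
      integral_map (by fun_prop) (Continuous.aestronglyMeasurable (by fun_prop))]
    have := h u.ofLp.1.ofLp u.ofLp.2.ofLp
    unfold jointCF margCF at this
    convert this using 4
    all_goals simp [PiLp.inner_apply, Finset.sum_add_distrib, mul_comm]
  have := key.comp (φ := fun v : EuclideanSpace ℝ (Fin k) => v.ofLp)
    (ψ := fun v : EuclideanSpace ℝ (Fin k) => v.ofLp) (by fun_prop) (by fun_prop)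
  exact this

lemma aux_indep {Ω : Type*} [MeasurableSpace Ω] (ℙ : Measure Ω) [IsProbabilityMeasure ℙ]
    [MeasurableSpace C(I, ℝ)] [BorelSpace C(I, ℝ)]
    (X Y : Ω → C(I, ℝ)) (hX : Measurable X) (hY : Measurable Y)
    (h : ∀ (k : ℕ) (x : Fin k → I) (s t : Fin k → ℝ),
      jointCF ℙ X Y x s t = margCF ℙ X x s * margCF ℙ Y x t) :
    ProbabilityTheory.IndepFun X Y ℙ := by
  classical
  obtain ⟨D, hDc, hDd⟩ := TopologicalSpace.exists_countable_dense I
  have : Countable D := hDc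
  have hproc : ProbabilityTheory.IndepFun (fun ω (d : D) => X ω d) (fun ω (d : D) => Y ω d) ℙ := by
    refine ProbabilityTheory.IndepFun.process_indepFun_process
      (X := fun (d : D) ω => X ω d) (Y := fun (d : D) ω => Y ω d)
      (fun d => aux_meas_eval hX d) (fun d => aux_meas_eval hY d) fun A B => ?_
    let e := (A ∪ B).equivFin
    have hf := aux_indep_fin ℙ X Y hX hY _ (fun i => ((e.symm i : D) : I)) (h _ _)
    have := hf.comp
      (φ := fun v (a : A) => v (e ⟨a, Finset.mem_union_left _ a.2⟩))
      (ψ := fun v (b : B) => v (e ⟨b, Finset.mem_union_right _ b.2⟩))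
      (by fun_prop) (by fun_prop)
    simpa [Function.comp_def] using this
  let r : C(I, ℝ) → (D → ℝ) := fun f d => f d
  have hr : MeasurableEmbedding r := by
    refine Continuous.measurableEmbedding
      (continuous_pi fun d => continuous_eval_const _) fun f g hfg => ?_
    refine DFunLike.coe_injective (Continuous.ext_on hDd f.continuous g.continuous ?_)
    intro d hd
    exact congrFun hfg ⟨d, hd⟩
  rw [ProbabilityTheory.IndepFun_iff_Indep] at hproc ⊢
  rw [← hr.comap_eq, MeasurableSpace.comap_comp, MeasurableSpace.comap_comp]
  exact hproc

lemma aux_cf_of_indep {Ω : Type*} [MeasurableSpace Ω] (ℙ : Measure Ω) [IsProbabilityMeasure ℙ]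
    [MeasurableSpace C(I, ℝ)] [BorelSpace C(I, ℝ)]
    (X Y : Ω → C(I, ℝ)) (hX : Measurable X) (hY : Measurable Y)
    (h : ProbabilityTheory.IndepFun X Y ℙ) (k : ℕ) (x : Fin k → I) (s t : Fin k → ℝ) :
    jointCF ℙ X Y x s t = margCF ℙ X x s * margCF ℙ Y x t := by
  have hev : ∀ s : Fin k → ℝ, Measurable fun f : C(I, ℝ) =>
      Complex.exp (Complex.I * ((∑ j, s j * f (x j) : ℝ) : ℂ)) := by
    intro s
    refine Continuous.measurable ?_
    fun_prop
  have := (h.comp (hev s) (hev t)).integral_fun_mul_eq_mul_integral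
    ((hev s).comp hX).aestronglyMeasurable ((hev t).comp hY).aestronglyMeasurable
  unfold jointCF margCF
  simp only [Function.comp_def] at this
  rw [← this]
  congr 1
  ext ω
  rw [← Complex.exp_add, ← mul_add, ← Complex.ofReal_add, Finset.sum_add_distrib]

/-- For `α ∈ (0,2)` and the weights `g_k(s) = c_k |s|^{−k−α}` normalized
so that `∫_{ℝ^k} (1 − cos⟨s,x⟩) g_k(s) ds = |x|^α`, the `α`-distance covariance
`D_α(X,Y)` vanishes iff the joint law of `(X,Y)` on `C([0,1],ℝ) × C([0,1],ℝ)` is the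
product of the law of `X` and the law of `Y`. -/
theorem distCovAlpha_eq_zero_iff_indep
    {Ω : Type*} [MeasurableSpace Ω] (ℙ : Measure Ω) [IsProbabilityMeasure ℙ]
    [MeasurableSpace C(I, ℝ)] [BorelSpace C(I, ℝ)]
    (X Y : Ω → C(I, ℝ)) (hX : Measurable X) (hY : Measurable Y)
    (α : ℝ) (hα : α ∈ Set.Ioo 0 2)
    (c : ℕ → ℝ) (hc_pos : ∀ k, 0 < c k)
    (hc_norm : ∀ k : ℕ, 1 ≤ k → ∀ x : Fin k → ℝ,
      (∫⁻ (s : Fin k → ℝ),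
          ENNReal.ofReal ((1 - Real.cos (∑ j, s j * x j)) * gWeight α k (c k) s))
        = ENNReal.ofReal ((∑ j, x j ^ 2) ^ (α / 2))) :
    distCovAlpha ℙ X Y α c = 0
      ↔ Measure.map (fun ω => (X ω, Y ω)) ℙ
          = (Measure.map X ℙ).prod (Measure.map Y ℙ) := by
  rw [← ProbabilityTheory.indepFun_iff_map_prod_eq_prod_map_map hX.aemeasurable hY.aemeasurable]
  constructor
  · intro h
    exact aux_indep ℙ X Y hX hY (aux_cf_eq ℙ X Y hX hY α c hc_pos h)
  · intro h
    simp [distCovAlpha, aux_cf_of_indep ℙ X Y hX hY h]
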